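/- If a group G admits a finite complete rewriting system, then G is algorithmically stackable: there exist a finite symmetric generating set (A′, ρ′, ι′) for G with A′ having decidable equality, a stackable structure for (G, A′), and an extended stacking map Φ for that structure such that the set S_Φ := {(w, a, Φ(π′(w), a)) : w ∈ List A′, a ∈ A′} has computable membership predicate (ComputablePred). -/

import Mathlib

namespace Stk

variable {G : Type*} [Group G] {A : Type*}

/-- Evaluation of a word over the generating alphabet in the group. -/
def eval (ρ : A → G) (w : List A) : G := (w.map ρ).prod

/-- `C` is a set of normal forms: evaluation restricted to `C` is a bijection onto `G`. -/
def IsNormalFormSet (ρ : A → G) (C : Set (List A)) : Prop :=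
  ∀ g : G, ∃! w : List A, w ∈ C ∧ eval ρ w = g

/-- The directed edge `(g, a)` of the Cayley graph is degenerate with respect to `C`. -/
def IsDegenerate (ρ : A → G) (ι : A → A) (C : Set (List A)) (e : G × A) : Prop :=
  ∃ y₁ y₂ : List A, y₁ ∈ C ∧ eval ρ y₁ = e.1 ∧ y₂ ∈ C ∧ eval ρ y₂ = e.1 * ρ e.2 ∧
    (y₁ ++ [e.2] = y₂ ∨ y₁ = y₂ ++ [ι e.2])

/-- A non-degenerate edge is recursive. -/
def IsRecursive (ρ : A → G) (ι : A → A) (C : Set (List A)) (e : G × A) : Prop :=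
  ¬ IsDegenerate ρ ι C e

/-- `e` is one of the edges along the path starting at `g` labeled by the word `w`. -/
def EdgeOnPath (ρ : A → G) (g : G) (w : List A) (e : G × A) : Prop :=
  ∃ i : Fin w.length, e = (g * eval ρ (w.take i), w.get i)

/-- A stackable structure for `(G, A)`: a normal form set `C` containing the empty word,
a well-founded strict partial order `lt` on the recursive edges, and a constant `k`,
such that each edge `(g, a)` admits a word of length at most `k` evaluating to `ρ a`,
each of whose edges along the path from `g` is degenerate or recursive and `lt`-below
`(g, a)`. -/
def IsStackableStructure (ρ : A → G) (ι : A → A) (C : Set (List A))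
    (lt : G × A → G × A → Prop) (k : ℕ) : Prop :=
  ([] : List A) ∈ C ∧ IsNormalFormSet ρ C ∧
  (∀ e e' : G × A, lt e e' → IsRecursive ρ ι C e ∧ IsRecursive ρ ι C e') ∧
  Transitive lt ∧ WellFounded lt ∧
  ∀ g : G, ∀ a : A, ∃ w : List A, w.length ≤ k ∧ eval ρ w = ρ a ∧
    ∀ e' : G × A, EdgeOnPath ρ g w e' → IsDegenerate ρ ι C e' ∨ lt e' (g, a)

/-- The pair `(G, A)` is stackable. -/
def IsStackable (ρ : A → G) (ι : A → A) : Prop :=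
  ∃ (C : Set (List A)) (lt : G × A → G × A → Prop) (k : ℕ),
    IsStackableStructure ρ ι C lt k

/-- A stacking map for a stackable structure. -/
def IsStackingMap (ρ : A → G) (ι : A → A) (C : Set (List A))
    (lt : G × A → G × A → Prop) (k : ℕ) (Φ : G × A → List A) : Prop :=
  ∀ e : G × A, IsRecursive ρ ι C e →
    eval ρ (Φ e) = ρ e.2 ∧ (Φ e).length ≤ k ∧
    ∀ e' : G × A, EdgeOnPath ρ e.1 (Φ e) e' → IsDegenerate ρ ι C e' ∨ lt e' e

/-- A stacking map extended by `Φ (g, a) = [a]` on degenerate edges. -/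
def IsExtendedStackingMap (ρ : A → G) (ι : A → A) (C : Set (List A))
    (lt : G × A → G × A → Prop) (k : ℕ) (Φ : G × A → List A) : Prop :=
  (∀ e : G × A, IsDegenerate ρ ι C e → Φ e = [e.2]) ∧ IsStackingMap ρ ι C lt k Φ

/-- A word is freely reduced if no letter is followed by its formal inverse. -/
def FreelyReduced (ι : A → A) (w : List A) : Prop :=
  List.Chain' (fun a b => b ≠ ι a) w


/-- One rewriting step: replace a contiguous occurrence of a left-hand side of a rule by
the corresponding right-hand side. -/
def Rewrites (R : Set (List A × List A)) (w w' : List A) : Prop :=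
  ∃ r ∈ R, ∃ x y : List A, w = x ++ r.1 ++ y ∧ w' = x ++ r.2 ++ y

/-- A word is irreducible if it contains no left-hand side of a rule as a contiguous
subword. -/
def RWIrreducible (R : Set (List A × List A)) (w : List A) : Prop :=
  ∀ r ∈ R, ¬ r.1 <:+: w

/-- `(A, R, ρ)` is a finite complete rewriting system for `G`: the rules form a finite
set of relations of `G`, each group element is represented by exactly one irreducible
word, and there is no infinite sequence of rewritings. -/
def IsCompleteRewritingSystem (ρ : A → G) (R : Set (List A × List A)) : Prop :=
  R.Finite ∧ (∀ r ∈ R, eval ρ r.1 = eval ρ r.2) ∧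
  (∀ g : G, ∃! w : List A, RWIrreducible R w ∧ eval ρ w = g) ∧
  WellFounded (fun w' w : List A => Rewrites R w w')

/-- A minimal finite complete rewriting system: right-hand sides and all proper subwords
of left-hand sides are irreducible. -/
def IsMinimalCRS (ρ : A → G) (R : Set (List A × List A)) : Prop :=
  IsCompleteRewritingSystem ρ R ∧
  ∀ r ∈ R, RWIrreducible R r.2 ∧
    ∀ u : List A, u <:+: r.1 → u ≠ r.1 → RWIrreducible R u

/-!
Write `y_g` for the irreducible word of `g`, and let the new generators be the nontrivial letters
of `A` together with formal inverses.  Deleting the trivial letters of the words `y_g` gives a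
prefix-closed set of normal forms.

For a recursive edge `(g, a)` with `a` a letter of `A`, the word `y_g a` is reducible while `y_g` is
not, so `y_g = x u` for some rule `u a → v`; the stacking map sends this edge to `u⁻¹ v`.  The `u⁻¹`
part retraces the normal form of `g`, so its edges are degenerate; an edge `(h, b)` in the `v` part
satisfies `y_g a → x v →* y_h b s` for some word `s`, which makes the order on edges well-founded.
A recursive edge labelled by a formal inverse is sent to the normal form of that group element; it
lies above all edges labelled by letters of `A`.  Rewriting computes `y_g`, hence the stacking map
is computable.
-/

section Words

variable {ρ : A → G} {N : Type*} {ρ' : N → G}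

@[simp]
theorem eval_nil : eval ρ [] = 1 := rfl

@[simp]
theorem eval_cons (a : A) (w : List A) : eval ρ (a :: w) = ρ a * eval ρ w := by
  simp [eval]

@[simp]
theorem eval_append (v w : List A) : eval ρ (v ++ w) = eval ρ v * eval ρ w := by
  simp [eval]

theorem eval_flatMap {f : N → List A} (hf : ∀ c, eval ρ (f c) = ρ' c) (w : List N) :
    eval ρ (w.flatMap f) = eval ρ' w := by
  induction w with
  | nil => rfl
  | cons c w ih => simp [hf, ih]

theorem eval_filterMap {f : N → Option A} (hf : ∀ c, (f c).elim 1 ρ = ρ' c) (w : List N) :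
    eval ρ (w.filterMap f) = eval ρ' w := by
  rw [List.filterMap_eq_flatMap_toList]
  refine eval_flatMap (fun c => ?_) w
  rw [← hf c]
  cases f c <;> simp

/-- The word representing the inverse of `w`, where `ι` sends each letter to its formal inverse. -/
def formalInverse (ι : A → A) (w : List A) : List A := (w.map ι).reverse

theorem formalInverse_concat (ι : A → A) (w : List A) (a : A) :
    formalInverse ι (w ++ [a]) = ι a :: formalInverse ι w := by
  simp [formalInverse]

theorem eval_formalInverse {ι : A → A} (hι : ∀ a, ρ (ι a) = (ρ a)⁻¹) (w : List A) :
    eval ρ (formalInverse ι w) = (eval ρ w)⁻¹ := by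
  simp [formalInverse, eval, List.prod_inv_reverse, Function.comp_def, hι]

end Words

section Paths

variable {ρ : A → G} {g : G} {e : G × A}

theorem edgeOnPath_iff {w : List A} :
    EdgeOnPath ρ g w e ↔ ∃ u v, w = u ++ e.2 :: v ∧ e.1 = g * eval ρ u := by
  constructor
  · rintro ⟨⟨i, hi⟩, rfl⟩
    exact ⟨w.take i, w.drop (i + 1), by simp, rfl⟩
  · rintro ⟨u, v, rfl, he⟩
    exact ⟨⟨u.length, by simp⟩, Prod.ext (by simpa using he) (by simp)⟩

theorem not_edgeOnPath_nil : ¬ EdgeOnPath ρ g [] e := by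
  simp [edgeOnPath_iff]

theorem edgeOnPath_cons {a : A} {w : List A} :
    EdgeOnPath ρ g (a :: w) e ↔ e = (g, a) ∨ EdgeOnPath ρ (g * ρ a) w e := by
  simp only [edgeOnPath_iff, List.cons_eq_append_iff]
  constructor
  · rintro ⟨u, v, ⟨rfl, h⟩ | ⟨u', rfl, rfl⟩, he⟩
    · obtain ⟨ha, -⟩ := List.cons.inj h
      exact .inl (Prod.ext (by simpa using he) ha)
    · exact .inr ⟨u', v, rfl, by simpa [mul_assoc] using he⟩
  · rintro (rfl | ⟨u, v, rfl, he⟩)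
    · exact ⟨[], w, .inl ⟨rfl, rfl⟩, by simp⟩
    · exact ⟨a :: u, v, .inr ⟨u, rfl, rfl⟩, by simpa [mul_assoc] using he⟩

theorem edgeOnPath_singleton {a : A} : EdgeOnPath ρ g [a] e ↔ e = (g, a) := by
  simp [edgeOnPath_cons, not_edgeOnPath_nil]

theorem edgeOnPath_append {v w : List A} :
    EdgeOnPath ρ g (v ++ w) e ↔ EdgeOnPath ρ g v e ∨ EdgeOnPath ρ (g * eval ρ v) w e := by
  induction v generalizing g with
  | nil => simp [not_edgeOnPath_nil]
  | cons a v ih => simp [edgeOnPath_cons, ih, mul_assoc, or_assoc]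

end Paths

section NormalForms

variable {ρ : A → G} {ι : A → A} {C : Set (List A)}

theorem IsNormalFormSet.closure_range_eq_top (hC : IsNormalFormSet ρ C) :
    Subgroup.closure (Set.range ρ) = ⊤ := by
  refine eq_top_iff.2 fun g _ => ?_
  obtain ⟨w, ⟨-, rfl⟩, -⟩ := hC g
  refine Subgroup.list_prod_mem _ fun x hx => Subgroup.subset_closure ?_
  obtain ⟨a, -, rfl⟩ := List.mem_map.1 hx
  exact Set.mem_range_self a

theorem IsNormalFormSet.isDegenerate_iff (hC : IsNormalFormSet ρ C) {y z : List A} {a : A}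
    (hy : y ∈ C) (hz : z ∈ C) (hyz : eval ρ z = eval ρ y * ρ a) :
    IsDegenerate ρ ι C (eval ρ y, a) ↔ y ++ [a] = z ∨ y = z ++ [ι a] := by
  constructor
  · rintro ⟨y', z', hy', hy'y, hz', hz'z, h⟩
    obtain rfl : y' = y := (hC _).unique ⟨hy', hy'y⟩ ⟨hy, rfl⟩
    obtain rfl : z' = z := (hC _).unique ⟨hz', hz'z⟩ ⟨hz, hyz⟩
    exact h
  · exact fun h => ⟨y, z, hy, rfl, hz, hyz, h⟩

theorem isDegenerate_of_concat_mem {y : List A} {a : A} (hy : y ∈ C) (hya : y ++ [a] ∈ C) :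
    IsDegenerate ρ ι C (eval ρ y, a) :=
  ⟨y, y ++ [a], hy, rfl, hya, by simp, .inl rfl⟩

theorem isDegenerate_inv_of_concat_mem (hinv : Function.Involutive ι)
    (hι : ∀ a, ρ (ι a) = (ρ a)⁻¹) {y : List A} {a : A} (hy : y ∈ C) (hya : y ++ [a] ∈ C) :
    IsDegenerate ρ ι C (eval ρ (y ++ [a]), ι a) :=
  ⟨y ++ [a], y, hya, rfl, hy, by simp [hι], .inr (by rw [hinv])⟩

theorem isDegenerate_of_edgeOnPath_formalInverse (hinv : Function.Involutive ι)
    (hι : ∀ a, ρ (ι a) = (ρ a)⁻¹) (hC : ∀ ⦃x y⦄, x <+: y → y ∈ C → x ∈ C)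
    {x v : List A} {e : G × A} (hxv : x ++ v ∈ C)
    (he : EdgeOnPath ρ (eval ρ (x ++ v)) (formalInverse ι v) e) : IsDegenerate ρ ι C e := by
  induction v using List.reverseRecOn with
  | nil => exact absurd he not_edgeOnPath_nil
  | append_singleton v a ih =>
    rw [← List.append_assoc] at hxv he
    have hxv' : x ++ v ∈ C := hC (List.prefix_append _ _) hxv
    rw [formalInverse_concat, edgeOnPath_cons] at he
    rcases he with rfl | he
    · exact isDegenerate_inv_of_concat_mem hinv hι hxv' hxv
    · exact ih hxv' (by simpa [hι, mul_assoc] using he)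

end NormalForms

section Stacking

variable {ρ : A → G} {ι : A → A} {C : Set (List A)} {Φ : G × A → List A} {k : ℕ}

/-- `StackingRel ρ ι C Φ e' e` says that `e'` is a recursive edge on the path that `Φ` assigns to
the recursive edge `e`.  Its transitive closure is the smallest order compatible with `Φ`. -/
def StackingRel (ρ : A → G) (ι : A → A) (C : Set (List A)) (Φ : G × A → List A)
    (e' e : G × A) : Prop :=
  IsRecursive ρ ι C e' ∧ IsRecursive ρ ι C e ∧ EdgeOnPath ρ e.1 (Φ e) e'

theorem isExtendedStackingMap_transGen (hdeg : ∀ e, IsDegenerate ρ ι C e → Φ e = [e.2])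
    (heval : ∀ e, eval ρ (Φ e) = ρ e.2) (hlen : ∀ e, (Φ e).length ≤ k) :
    IsExtendedStackingMap ρ ι C (Relation.TransGen (StackingRel ρ ι C Φ)) k Φ := by
  refine ⟨hdeg, fun e he => ⟨heval e, hlen e, fun e' he' => ?_⟩⟩
  by_cases hd : IsDegenerate ρ ι C e'
  · exact .inl hd
  · exact .inr (.single ⟨hd, he, he'⟩)

theorem isStackableStructure_transGen (hnil : [] ∈ C) (hC : IsNormalFormSet ρ C)
    (hwf : WellFounded (StackingRel ρ ι C Φ))
    (hdeg : ∀ e, IsDegenerate ρ ι C e → Φ e = [e.2])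
    (heval : ∀ e, eval ρ (Φ e) = ρ e.2) (hlen : ∀ e, (Φ e).length ≤ k) :
    IsStackableStructure ρ ι C (Relation.TransGen (StackingRel ρ ι C Φ)) k := by
  refine ⟨hnil, hC, fun e e' h => ?_, fun _ _ _ => .trans, hwf.transGen, fun g a => ?_⟩
  · obtain ⟨_, h₁, -⟩ := Relation.TransGen.head'_iff.1 h
    obtain ⟨_, -, h₂⟩ := Relation.TransGen.tail'_iff.1 h
    exact ⟨h₁.1, h₂.2.1⟩
  · refine ⟨Φ (g, a), hlen _, heval _, fun e' he' => ?_⟩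
    by_cases hd : IsDegenerate ρ ι C (g, a)
    · rw [hdeg _ hd, edgeOnPath_singleton] at he'
      exact .inl (he' ▸ hd)
    · exact ((isExtendedStackingMap_transGen hdeg heval hlen).2 _ hd).2.2 e' he'

end Stacking

section Rewriting

variable {R : Set (List A × List A)} {v w : List A}

theorem RWIrreducible.of_infix (hw : RWIrreducible R w) (h : v <:+: w) : RWIrreducible R v :=
  fun r hr hrv => hw r hr (hrv.trans h)

theorem RWIrreducible.concat {a : A} (hw : RWIrreducible R w)
    (h : ∀ r ∈ R, ¬ r.1 <:+ w ++ [a]) : RWIrreducible R (w ++ [a]) :=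
  fun r hr hrw => (List.infix_concat_iff.1 hrw).elim (h r hr) (hw r hr)

theorem exists_rewrites_of_not_irreducible (hw : ¬ RWIrreducible R w) : ∃ v, Rewrites R w v := by
  simp only [RWIrreducible, not_forall, not_not] at hw
  obtain ⟨r, hr, x, y, hxy⟩ := hw
  exact ⟨x ++ r.2 ++ y, r, hr, x, y, hxy.symm, rfl⟩

theorem Rewrites.append_right (h : Rewrites R v w) (s : List A) :
    Rewrites R (v ++ s) (w ++ s) := by
  obtain ⟨r, hr, x, y, rfl, rfl⟩ := h
  exact ⟨r, hr, x, y ++ s, by simp, by simp⟩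

theorem Rewrites.eval_eq {ρ : A → G} (hρ : ∀ r ∈ R, eval ρ r.1 = eval ρ r.2)
    (h : Rewrites R v w) : eval ρ v = eval ρ w := by
  obtain ⟨r, hr, x, y, rfl, rfl⟩ := h
  simp [hρ r hr]

/-- `v` is a prefix of a word obtained from `w` by at least one rewriting step. -/
def IsPrefixOfReduct (R : Set (List A × List A)) (v w : List A) : Prop :=
  ∃ s, Relation.TransGen (Rewrites R) w (v ++ s)

theorem wellFounded_isPrefixOfReduct (hR : WellFounded fun w' w : List A => Rewrites R w w') :
    WellFounded (IsPrefixOfReduct R) := by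
  suffices h : ∀ w v, v <+: w → Acc (IsPrefixOfReduct R) v from ⟨fun w => h w w List.prefix_rfl⟩
  intro w
  induction w using hR.transGen.induction with
  | _ w ih =>
    rintro v ⟨t, rfl⟩
    refine ⟨v, fun v' ⟨s, hs⟩ => ih (v' ++ s ++ t) ?_ v' ⟨s ++ t, by simp⟩⟩
    exact Relation.transGen_swap.1 (hs.lift (· ++ t) fun _ _ h => h.append_right t)

end Rewriting

namespace IsCompleteRewritingSystem

variable {ρ : A → G} {R : Set (List A × List A)}

theorem exists_reflTransGen_irreducible (hR : IsCompleteRewritingSystem ρ R) (w : List A) :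
    ∃ v, Relation.ReflTransGen (Rewrites R) w v ∧ RWIrreducible R v ∧ eval ρ v = eval ρ w := by
  induction w using hR.2.2.2.induction with
  | _ w ih =>
    by_cases hw : RWIrreducible R w
    · exact ⟨w, .refl, hw, rfl⟩
    · obtain ⟨w', hww'⟩ := exists_rewrites_of_not_irreducible hw
      obtain ⟨v, hw'v, hv, hvw'⟩ := ih w' hww'
      exact ⟨v, .head hww' hw'v, hv, hvw'.trans (hww'.eval_eq hR.2.1).symm⟩

/-- The irreducible word representing a group element. -/
noncomputable def normalForm (hR : IsCompleteRewritingSystem ρ R) (g : G) : List A :=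
  (hR.2.2.1 g).choose

theorem irreducible_normalForm (hR : IsCompleteRewritingSystem ρ R) (g : G) :
    RWIrreducible R (hR.normalForm g) :=
  (hR.2.2.1 g).choose_spec.1.1

@[simp]
theorem eval_normalForm (hR : IsCompleteRewritingSystem ρ R) (g : G) :
    eval ρ (hR.normalForm g) = g :=
  (hR.2.2.1 g).choose_spec.1.2

theorem normalForm_eval (hR : IsCompleteRewritingSystem ρ R) {w : List A}
    (hw : RWIrreducible R w) : hR.normalForm (eval ρ w) = w :=
  (hR.2.2.1 _).unique ⟨hR.irreducible_normalForm _, hR.eval_normalForm _⟩ ⟨hw, rfl⟩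

theorem reflTransGen_normalForm (hR : IsCompleteRewritingSystem ρ R) (w : List A) :
    Relation.ReflTransGen (Rewrites R) w (hR.normalForm (eval ρ w)) := by
  obtain ⟨v, hwv, hv, hvw⟩ := hR.exists_reflTransGen_irreducible w
  rwa [← hvw, hR.normalForm_eval hv]

theorem irreducible_nil (hR : IsCompleteRewritingSystem ρ R) : RWIrreducible R ([] : List A) :=
  (hR.irreducible_normalForm 1).of_infix List.nil_infix

theorem lhs_ne_nil (hR : IsCompleteRewritingSystem ρ R) {r : List A × List A} (hr : r ∈ R) :
    r.1 ≠ [] :=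
  fun h => hR.irreducible_nil r hr (h ▸ List.nil_infix)

theorem isPrefixOfReduct_of_rule (hR : IsCompleteRewritingSystem ρ R) {x u v v' : List A} {a b : A}
    (hr : (u ++ [a], v ++ b :: v') ∈ R) :
    IsPrefixOfReduct R (hR.normalForm (eval ρ (x ++ v)) ++ [b]) (x ++ u ++ [a]) := by
  have hstep : Rewrites R (x ++ u ++ [a]) (x ++ v ++ b :: v') :=
    ⟨_, hr, x, [], by simp, by simp⟩
  have hred : Relation.ReflTransGen (Rewrites R) (x ++ v ++ b :: v')
      (hR.normalForm (eval ρ (x ++ v)) ++ b :: v') :=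
    (hR.reflTransGen_normalForm _).lift (· ++ b :: v') fun _ _ h => h.append_right _
  exact ⟨v', by simpa using Relation.TransGen.head' hstep hred⟩

end IsCompleteRewritingSystem

section SuffixRules

variable [DecidableEq A] {L : List (List A × List A)}

/-- The first rule of `L` whose left-hand side is a suffix of `w`. -/
def suffixRule (L : List (List A × List A)) (w : List A) : Option (List A × List A) :=
  L.find? fun r => r.1 <:+ w

theorem suffixRule_eq_none {w : List A} : suffixRule L w = none ↔ ∀ r ∈ L, ¬ r.1 <:+ w := by
  simp [suffixRule]

theorem mem_and_isSuffix_of_suffixRule {w : List A} {r : List A × List A}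
    (h : suffixRule L w = some r) : r ∈ L ∧ r.1 <:+ w :=
  ⟨List.mem_of_find?_eq_some h, by simpa using List.find?_some h⟩

/-- One rewriting step with the rules in `L`, at the leftmost place where a left-hand side ends;
`none` on irreducible words. -/
def rewriteStep (L : List (List A × List A)) (w : List A) : Option (List A) :=
  (List.range (w.length + 1)).findSome? fun n =>
    (suffixRule L (w.take n)).map fun r => w.take (n - r.1.length) ++ r.2 ++ w.drop n

theorem rewrites_of_rewriteStep {v w : List A} (h : rewriteStep L w = some v) :
    Rewrites {r | r ∈ L} w v := by
  obtain ⟨n, hn, h⟩ := List.exists_of_findSome?_eq_some h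
  obtain ⟨r, hr, rfl⟩ := Option.map_eq_some_iff.1 h
  obtain ⟨hrL, x, hx⟩ := mem_and_isSuffix_of_suffixRule hr
  have hw : x ++ r.1 ++ w.drop n = w := by rw [hx, List.take_append_drop]
  have hlen : n - r.1.length = x.length := by
    have := congrArg List.length hx
    simp only [List.length_append, List.length_take, List.mem_range] at this hn
    omega
  have htake : w.take (n - r.1.length) = x := by
    rw [hlen, ← hw, List.append_assoc, List.take_left]
  exact ⟨r, hrL, x, w.drop n, hw.symm, by rw [htake]⟩

theorem irreducible_of_rewriteStep {w : List A} (h : rewriteStep L w = none) :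
    RWIrreducible {r | r ∈ L} w := by
  intro r hr hrw
  obtain ⟨t, hrt, htw⟩ := List.infix_iff_suffix_prefix.1 hrw
  have hnone := List.findSome?_eq_none_iff.1 h t.length
    (List.mem_range.2 (Nat.lt_succ_of_le htw.length_le))
  rw [← List.prefix_iff_eq_take.1 htw, Option.map_eq_none_iff] at hnone
  exact suffixRule_eq_none.1 hnone r hr hrt

end SuffixRules

section Computability

theorem computable_of_wellFounded_step {α : Type*} [Primcodable α] {step : α → Option α}
    {nf : α → α} (hstep : Computable step) (hwf : WellFounded fun b a => step a = some b)
    (hnone : ∀ a, step a = none → nf a = a) (hsome : ∀ a b, step a = some b → nf a = nf b) :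
    Computable nf := by
  let f : α → α ⊕ α := fun a => (step a).elim (.inl a) .inr
  have hf : Computable f :=
    (Computable.option_casesOn hstep (Computable.sumInl.comp Computable.id)
      (Computable.sumInr.comp Computable.snd).to₂).of_eq fun a => by
        cases h : step a <;> simp [f, h]
  refine (Partrec.fix hf.partrec).of_eq fun a => Part.eq_some_iff.2 ?_
  induction a using hwf.induction with
  | _ a ih =>
    rw [PFun.mem_fix_iff]
    cases h : step a with
    | none => simp [f, h, hnone a h]
    | some b => exact .inr ⟨b, by simp [f, h], hsome a b h ▸ ih b h⟩

theorem computablePred_eq {α β : Type*} [Primcodable α] [Primcodable β] {f g : α → β}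
    (hf : Computable f) (hg : Computable g) : ComputablePred fun a => f a = g a := by
  classical
  have heq : Primrec₂ fun b c : β => decide (b = c) := Primrec.eq.decide
  exact ⟨inferInstance, heq.to_comp.comp hf hg⟩

theorem primrec_findSome? {α β σ : Type*} [Primcodable α] [Primcodable β] [Primcodable σ]
    {f : α → List β} {g : α → β → Option σ} (hf : Primrec f) (hg : Primrec₂ g) :
    Primrec fun a => (f a).findSome? (g a) :=
  (Primrec.list_head?.comp (Primrec.listFilterMap hf hg)).of_eq fun _ => List.head?_filterMap

theorem primrec_dropLast {α : Type*} [Primcodable α] : Primrec (List.dropLast (α := α)) :=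
  (Primrec.list_take.comp (Primrec.pred.comp Primrec.list_length) Primrec.id).of_eq fun _ =>
    List.dropLast_eq_take.symm

theorem primrecRel_isSuffix {α : Type*} [Primcodable α] :
    PrimrecRel fun v w : List α => v <:+ w :=
  (Primrec.eq.comp₂ Primrec₂.left (Primrec.list_drop.comp₂
    (Primrec.nat_sub.comp₂ (Primrec.list_length.comp₂ Primrec₂.right)
      (Primrec.list_length.comp₂ Primrec₂.left)) Primrec₂.right)).of_eq fun _ _ =>
    List.suffix_iff_eq_drop.symm

variable [Primcodable A] {L : List (List A × List A)}

theorem primrec_suffixRule [DecidableEq A] : Primrec (suffixRule L) := by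
  have hsuffix : PrimrecRel fun (r : List A × List A) w => r.1 <:+ w :=
    primrecRel_isSuffix.comp₂ (Primrec.fst.comp₂ Primrec₂.left) Primrec₂.right
  exact (Primrec.list_head?.comp ((PrimrecRel.listFilter hsuffix).comp (.const L) .id)).of_eq
    fun _ => List.head?_filter

theorem primrec_rewriteStep [DecidableEq A] : Primrec (rewriteStep L) := by
  have htake : Primrec₂ fun (w : List A) (n : ℕ) => w.take n :=
    Primrec.list_take.comp₂ Primrec₂.right Primrec₂.left
  refine primrec_findSome? (Primrec.list_range.comp (Primrec.succ.comp Primrec.list_length))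
    (Primrec.option_map (primrec_suffixRule.comp htake) ?_)
  have hw : Primrec fun p : (List A × ℕ) × List A × List A => p.1.1 := Primrec.fst.comp .fst
  have hn : Primrec fun p : (List A × ℕ) × List A × List A => p.1.2 := Primrec.snd.comp .fst
  have hlhs : Primrec fun p : (List A × ℕ) × List A × List A => p.2.1 := Primrec.fst.comp .snd
  have hrhs : Primrec fun p : (List A × ℕ) × List A × List A => p.2.2 := Primrec.snd.comp .snd
  exact Primrec.list_append.comp (Primrec.list_append.comp
    (htake.comp hw (Primrec.nat_sub.comp hn (Primrec.list_length.comp hlhs))) hrhs)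
    (Primrec.list_drop.comp hn hw)

theorem IsCompleteRewritingSystem.computable_normalForm_eval {ρ : A → G}
    (hR : IsCompleteRewritingSystem ρ {r | r ∈ L}) :
    Computable fun w => hR.normalForm (eval ρ w) := by
  classical
  exact computable_of_wellFounded_step (primrec_rewriteStep (L := L)).to_comp
    (Subrelation.wf rewrites_of_rewriteStep hR.2.2.2)
    (fun _ h => hR.normalForm_eval (irreducible_of_rewriteStep h))
    fun _ _ h => by rw [(rewrites_of_rewriteStep h).eval_eq hR.2.1]

end Computability

/-- A symmetric alphabet `N` of nontrivial elements obtained from the nontrivial letters of `A`.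
The partial bijection `letter` is undefined on the letters of `A` that evaluate to `1`, and the
elements of `N` outside its range are formal inverses. -/
structure Symmetrization (ρ : A → G) (N : Type*) where
  /-- The group element represented by a letter. -/
  gen : N → G
  /-- The formal inverse of a letter. -/
  inv : N → N
  /-- The letter of `N` corresponding to a nontrivial letter of `A`. -/
  letter : A ≃. N
  gen_ne_one : ∀ c, gen c ≠ 1
  involutive_inv : Function.Involutive inv
  gen_inv : ∀ c, gen (inv c) = (gen c)⁻¹
  elim_letter : ∀ a, (letter a).elim 1 gen = ρ a

namespace Symmetrization

variable {ρ : A → G} {N : Type*}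

section Existence

open Classical in
/-- The alphabet consisting of the nontrivial letters and a second copy of them, as formal
inverses. -/
noncomputable def formal (ρ : A → G) : Symmetrization ρ ({a // ρ a ≠ 1} ⊕ {a // ρ a ≠ 1}) where
  gen := Sum.elim (fun a => ρ a) fun a => (ρ a)⁻¹
  inv := Sum.swap
  letter :=
    { toFun := fun a => if h : ρ a ≠ 1 then some (.inl ⟨a, h⟩) else none
      invFun := Sum.elim (fun a => some a.1) fun _ => none
      inv := by
        rintro a (⟨b, hb⟩ | b)
        · by_cases h : ρ a = 1
          · have hba : b ≠ a := fun hba => hb (hba ▸ h)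
            simp [h, hba]
          · simp [h, eq_comm]
        · simp [dite_eq_iff] }
  gen_ne_one := by rintro (a | a) <;> simp [a.2]
  involutive_inv := Sum.swap_swap
  gen_inv := by rintro (a | a) <;> simp
  elim_letter a := by by_cases h : ρ a = 1 <;> simp [DFunLike.coe, h]

/-- Renaming of the letters of a symmetrization. -/
def congr {N' : Type*} (S : Symmetrization ρ N) (e : N ≃ N') : Symmetrization ρ N' where
  gen := S.gen ∘ e.symm
  inv := e ∘ S.inv ∘ e.symm
  letter := S.letter.trans e.toPEquiv
  gen_ne_one c := S.gen_ne_one (e.symm c)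
  involutive_inv c := by simp [S.involutive_inv (e.symm c)]
  gen_inv c := by simp [S.gen_inv]
  elim_letter a := by
    rw [← S.elim_letter a]
    change ((S.letter a).bind e.toPEquiv).elim 1 (S.gen ∘ e.symm) = _
    cases S.letter a <;> simp [Equiv.toPEquiv_apply]

theorem exists_fin [Finite A] (ρ : A → G) : ∃ n, Nonempty (Symmetrization ρ (Fin n)) :=
  (Finite.exists_equiv_fin _).imp fun _ ⟨e⟩ => ⟨(formal ρ).congr e⟩

end Existence

variable (S : Symmetrization ρ N)

theorem gen_of_letter_eq_some {a : A} {c : N} (h : S.letter a = some c) : S.gen c = ρ a := by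
  simpa [h] using S.elim_letter a

/-- The image of a word under the substitution `letter`, which deletes the trivial letters. -/
def embed (w : List A) : List N := w.filterMap S.letter

@[simp]
theorem embed_append (v w : List A) : S.embed (v ++ w) = S.embed v ++ S.embed w :=
  List.filterMap_append

@[simp]
theorem eval_embed (w : List A) : eval S.gen (S.embed w) = eval ρ w :=
  eval_filterMap S.elim_letter w

theorem edgeOnPath_embed {g : G} {v : List A} {e : G × N}
    (h : EdgeOnPath S.gen g (S.embed v) e) :
    ∃ v₁ b v₂, v = v₁ ++ b :: v₂ ∧ e.1 = g * eval ρ v₁ ∧ S.letter b = some e.2 := by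
  obtain ⟨p, q, hpq, he⟩ := edgeOnPath_iff.1 h
  obtain ⟨v₁, v₂, rfl, rfl, hv₂⟩ := List.filterMap_eq_append_iff.1 hpq
  obtain ⟨t, b, s, rfl, ht, hb, -⟩ := List.filterMap_eq_cons_iff.1 hv₂
  have ht' : S.embed t = [] := List.filterMap_eq_nil_iff.2 ht
  refine ⟨v₁ ++ t, b, s, by simp, ?_, hb⟩
  rw [he, ← S.eval_embed (v₁ ++ t), S.embed_append, ht', List.append_nil]
  rfl

section NormalForms

variable {R : Set (List A × List A)}

/-- The words over `N` obtained from the irreducible words. -/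
def normalForms (R : Set (List A × List A)) : Set (List N) :=
  S.embed '' {w | RWIrreducible R w}

theorem embed_mem_normalForms {w : List A} (hw : RWIrreducible R w) :
    S.embed w ∈ S.normalForms R :=
  Set.mem_image_of_mem _ hw

theorem mem_normalForms_of_prefix ⦃x y : List N⦄ (hxy : x <+: y) (hy : y ∈ S.normalForms R) :
    x ∈ S.normalForms R := by
  obtain ⟨w, hw, rfl⟩ := hy
  obtain ⟨v, hvw, rfl⟩ := List.prefix_filterMap_iff.1 hxy
  exact S.embed_mem_normalForms (hw.of_infix hvw.isInfix)

theorem nil_mem_normalForms (hR : IsCompleteRewritingSystem ρ R) : [] ∈ S.normalForms R :=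
  S.embed_mem_normalForms hR.irreducible_nil

theorem isNormalFormSet_normalForms (hR : IsCompleteRewritingSystem ρ R) :
    IsNormalFormSet S.gen (S.normalForms R) := by
  intro g
  refine ⟨S.embed (hR.normalForm g), ⟨S.embed_mem_normalForms (hR.irreducible_normalForm g),
    by simp⟩, ?_⟩
  rintro _ ⟨⟨w, hw, rfl⟩, rfl⟩
  rw [eval_embed, hR.normalForm_eval hw]

theorem isDegenerate_of_irreducible_concat {y : List A} {a : A} {c : N}
    (hya : RWIrreducible R (y ++ [a])) (ha : S.letter a = some c) :
    IsDegenerate S.gen S.inv (S.normalForms R) (eval ρ y, c) := by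
  have hy : RWIrreducible R y := hya.of_infix (List.prefix_append y [a]).isInfix
  rw [← S.eval_embed y]
  refine isDegenerate_of_concat_mem (S.embed_mem_normalForms hy) ?_
  simpa [embed, ha] using S.embed_mem_normalForms hya

end NormalForms

section Rank

variable {R : Set (List A × List A)} (hR : IsCompleteRewritingSystem ρ R) {e : G × N}

/-- The measure of an edge along which stacking decreases: the word `y_g a` for an edge `(g, a)`
labelled by a letter of `A`, and a top element for an edge labelled by any other letter. -/
noncomputable def rank (e : G × N) : List A ⊕ Unit :=
  (S.letter.symm e.2).elim (.inr ()) fun a => .inl (hR.normalForm e.1 ++ [a])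

theorem rank_of_letter_symm_eq_none (hc : S.letter.symm e.2 = none) : S.rank hR e = .inr () := by
  simp [rank, hc]

theorem rank_of_letter_eq_some {a : A} (ha : S.letter a = some e.2) :
    S.rank hR e = .inl (hR.normalForm e.1 ++ [a]) := by
  simp [rank, S.letter.eq_some_iff.2 ha]

end Rank

section StackingMap

variable [DecidableEq A] {L : List (List A × List A)}
  (hR : IsCompleteRewritingSystem ρ {r | r ∈ L})

/-- The word `u⁻¹v` over `N` attached to a rule `ua → v` with `a` a letter. -/
def ruleWord (r : List A × List A) : List N :=
  formalInverse S.inv (S.embed r.1.dropLast) ++ S.embed r.2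

/-- The word that the stacking map assigns to the edge `(g, c)` if it is recursive, as a function of
the irreducible word `y` of `g`.  The value `[c]` occurs only for degenerate edges. -/
noncomputable def recursiveWord (y : List A) (c : N) : List N :=
  match S.letter.symm c with
  | none => S.embed (hR.normalForm (S.gen c))
  | some a =>
    match suffixRule L (y ++ [a]) with
    | none => [c]
    | some r => S.ruleWord r

open Classical in
/-- The extended stacking map constructed from the rewriting rules in `L`. -/
noncomputable def stackingMap (e : G × N) : List N :=
  if IsDegenerate S.gen S.inv (S.normalForms {r | r ∈ L}) e then [e.2]
  else S.recursiveWord hR (hR.normalForm e.1) e.2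

variable {g : G} {c : N} {e e' : G × N}

theorem stackingMap_of_isDegenerate
    (he : IsDegenerate S.gen S.inv (S.normalForms {r | r ∈ L}) e) :
    S.stackingMap hR e = [e.2] :=
  if_pos he

open Classical in
theorem stackingMap_eq_ite (g : G) (c : N) :
    S.stackingMap hR (g, c) =
      if S.embed (hR.normalForm g) ++ [c] = S.embed (hR.normalForm (g * S.gen c)) ∨
          S.embed (hR.normalForm g) = S.embed (hR.normalForm (g * S.gen c)) ++ [S.inv c]
      then [c] else S.recursiveWord hR (hR.normalForm g) c := by
  have hmem (h : G) := S.embed_mem_normalForms (hR.irreducible_normalForm h)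
  refine if_congr ?_ rfl rfl
  rw [← (S.isNormalFormSet_normalForms hR).isDegenerate_iff (hmem g) (hmem _) (by simp)]
  simp

theorem stackingMap_of_letter_symm_eq_none (hc : S.letter.symm c = none)
    (he : IsRecursive S.gen S.inv (S.normalForms {r | r ∈ L}) (g, c)) :
    S.stackingMap hR (g, c) = S.embed (hR.normalForm (S.gen c)) := by
  rw [stackingMap, if_neg he, recursiveWord, hc]

theorem exists_rule_of_isRecursive {a : A} (ha : S.letter a = some c)
    (he : IsRecursive S.gen S.inv (S.normalForms {r | r ∈ L}) (g, c)) :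
    ∃ x u v, (u ++ [a], v) ∈ L ∧ hR.normalForm g = x ++ u ∧
      S.stackingMap hR (g, c) = formalInverse S.inv (S.embed u) ++ S.embed v := by
  have hword : S.stackingMap hR (g, c) = S.recursiveWord hR (hR.normalForm g) c := if_neg he
  rw [recursiveWord, (S.letter.eq_some_iff).2 ha] at hword
  cases hr : suffixRule L (hR.normalForm g ++ [a]) with
  | none =>
    have hirr := (hR.irreducible_normalForm g).concat (suffixRule_eq_none.1 hr)
    exact absurd (by simpa using S.isDegenerate_of_irreducible_concat hirr ha) he
  | some r =>
    obtain ⟨lhs, v⟩ := r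
    obtain ⟨hrL, hsuffix⟩ := mem_and_isSuffix_of_suffixRule hr
    obtain ⟨u, rfl, x, hx⟩ := (List.suffix_concat_iff.1 hsuffix).resolve_left (hR.lhs_ne_nil hrL)
    exact ⟨x, u, v, hrL, hx.symm, by simpa [hr, ruleWord] using hword⟩

theorem eval_stackingMap (e : G × N) : eval S.gen (S.stackingMap hR e) = S.gen e.2 := by
  obtain ⟨g, c⟩ := e
  by_cases he : IsDegenerate S.gen S.inv (S.normalForms {r | r ∈ L}) (g, c)
  · simp [S.stackingMap_of_isDegenerate hR he]
  cases hc : S.letter.symm c with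
  | none => simp [S.stackingMap_of_letter_symm_eq_none hR hc he]
  | some a =>
    have ha : S.letter a = some c := S.letter.eq_some_iff.1 hc
    obtain ⟨x, u, v, hr, -, hword⟩ := S.exists_rule_of_isRecursive hR ha he
    have huv : eval ρ u * ρ a = eval ρ v := by simpa using hR.2.1 _ hr
    simp [hword, eval_formalInverse S.gen_inv, ← huv, S.gen_of_letter_eq_some ha]

theorem finite_range_stackingMap [Finite N] : (Set.range (S.stackingMap hR)).Finite := by
  have hfin := ((Set.finite_range fun c : N => [c]).union
    (Set.finite_range fun c => S.embed (hR.normalForm (S.gen c)))).union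
    (L.finite_toSet.image S.ruleWord)
  refine hfin.subset ?_
  rintro _ ⟨e, rfl⟩
  rw [stackingMap, recursiveWord]
  split_ifs
  · exact .inl (.inl ⟨_, rfl⟩)
  split
  · exact .inl (.inr ⟨_, rfl⟩)
  split
  · exact .inl (.inl ⟨_, rfl⟩)
  · next hr => exact .inr ⟨_, (mem_and_isSuffix_of_suffixRule hr).1, rfl⟩

theorem exists_length_stackingMap_le [Finite N] : ∃ k, ∀ e, (S.stackingMap hR e).length ≤ k := by
  obtain ⟨k, hk⟩ := ((S.finite_range_stackingMap hR).image List.length).bddAbove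
  exact ⟨k, fun e => hk ⟨_, ⟨e, rfl⟩, rfl⟩⟩

theorem rank_lt_of_stackingRel
    (h : StackingRel S.gen S.inv (S.normalForms {r | r ∈ L}) (S.stackingMap hR) e' e) :
    Sum.Lex (IsPrefixOfReduct {r | r ∈ L}) emptyRelation (S.rank hR e') (S.rank hR e) := by
  obtain ⟨g, c⟩ := e
  obtain ⟨he', he, hpath⟩ := h
  cases hc : S.letter.symm c with
  | none =>
    rw [S.stackingMap_of_letter_symm_eq_none hR hc he] at hpath
    obtain ⟨v, b, v', -, -, hb⟩ := S.edgeOnPath_embed hpath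
    rw [S.rank_of_letter_eq_some hR hb, S.rank_of_letter_symm_eq_none hR hc]
    exact .sep _ _
  | some a =>
    have ha : S.letter a = some c := S.letter.eq_some_iff.1 hc
    obtain ⟨x, u, v, hr, hxu, hword⟩ := S.exists_rule_of_isRecursive hR ha he
    have hg : g = eval ρ (x ++ u) := by rw [← hxu, hR.eval_normalForm]
    have hmem : S.embed x ++ S.embed u ∈ S.normalForms {r | r ∈ L} := by
      rw [← S.embed_append, ← hxu]
      exact S.embed_mem_normalForms (hR.irreducible_normalForm g)
    rw [hword, edgeOnPath_append] at hpath
    rcases hpath with hpath | hpath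
    · refine absurd (isDegenerate_of_edgeOnPath_formalInverse S.involutive_inv S.gen_inv
        S.mem_normalForms_of_prefix hmem ?_) he'
      rwa [← S.embed_append, S.eval_embed, ← hg]
    · obtain ⟨v, b, v', rfl, hhead, hb⟩ := S.edgeOnPath_embed hpath
      have hhead' : e'.1 = eval ρ (x ++ v) := by
        simp [hhead, hg, eval_formalInverse S.gen_inv]
      rw [S.rank_of_letter_eq_some hR hb, S.rank_of_letter_eq_some hR ha, hhead', hxu]
      exact .inl (hR.isPrefixOfReduct_of_rule hr)

theorem wellFounded_stackingRel :
    WellFounded (StackingRel S.gen S.inv (S.normalForms {r | r ∈ L}) (S.stackingMap hR)) :=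
  Subrelation.wf (S.rank_lt_of_stackingRel hR) <| InvImage.wf (S.rank hR) <|
    Sum.lex_wf (wellFounded_isPrefixOfReduct hR.2.2.2) emptyWf.wf

end StackingMap

section Computability

variable [Primcodable A] [Primcodable N] {L : List (List A × List A)}
  (hR : IsCompleteRewritingSystem ρ {r | r ∈ L})

theorem computable_normalForm_eval_gen [Finite N] :
    Computable fun w : List N => hR.normalForm (eval S.gen w) := by
  have hword : Primrec fun w : List N => w.flatMap fun c => hR.normalForm (S.gen c) :=
    Primrec.list_flatMap Primrec.id
      ((Primrec.dom_finite fun c => hR.normalForm (S.gen c)).comp₂ Primrec₂.right)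
  refine (hR.computable_normalForm_eval.comp hword.to_comp).of_eq fun w => ?_
  rw [eval_flatMap fun c => hR.eval_normalForm (S.gen c)]

theorem primrec_embed [Finite A] : Primrec S.embed :=
  Primrec.listFilterMap Primrec.id ((Primrec.dom_finite S.letter).comp₂ Primrec₂.right)

variable [Finite A] [Finite N]

theorem primrec_ruleWord : Primrec S.ruleWord := by
  have hinv : Primrec (formalInverse S.inv) :=
    Primrec.list_reverse.comp
      (Primrec.list_map Primrec.id ((Primrec.dom_finite S.inv).comp₂ Primrec₂.right))
  exact Primrec.list_append.comp
    (hinv.comp (S.primrec_embed.comp (primrec_dropLast.comp Primrec.fst)))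
    (S.primrec_embed.comp Primrec.snd)

variable [DecidableEq A]

theorem primrec_recursiveWord : Primrec₂ (S.recursiveWord hR) := by
  have hrule : Primrec₂ fun (p : List A × N) (a : A) =>
      Option.casesOn (motive := fun _ => List N) (suffixRule L (p.1 ++ [a])) [p.2] S.ruleWord :=
    Primrec.option_casesOn
      (primrec_suffixRule.comp
        (Primrec.list_concat.comp (Primrec.fst.comp Primrec.fst) Primrec.snd))
      ((Primrec.dom_finite fun c : N => [c]).comp (Primrec.snd.comp Primrec.fst))
      (S.primrec_ruleWord.comp₂ Primrec₂.right)
  refine (Primrec.option_casesOn ((Primrec.dom_finite S.letter.symm).comp Primrec.snd)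
    ((Primrec.dom_finite fun c => S.embed (hR.normalForm (S.gen c))).comp Primrec.snd)
    hrule).of_eq fun ⟨y, c⟩ => ?_
  rw [recursiveWord]
  cases S.letter.symm c with
  | none => rfl
  | some a =>
    dsimp only
    cases suffixRule L (y ++ [a]) <;> rfl

theorem computable₂_stackingMap_eval :
    Computable₂ fun (w : List N) (c : N) => S.stackingMap hR (eval S.gen w, c) := by
  classical
  have hletter (f : N → N) : Primrec fun q : (List A × List A) × N => [f q.2] :=
    (Primrec.dom_finite fun c => [f c]).comp Primrec.snd
  have hy : Primrec fun q : (List A × List A) × N => S.embed q.1.1 :=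
    S.primrec_embed.comp (Primrec.fst.comp Primrec.fst)
  have hz : Primrec fun q : (List A × List A) × N => S.embed q.1.2 :=
    S.primrec_embed.comp (Primrec.snd.comp Primrec.fst)
  have hword : Primrec fun q : (List A × List A) × N =>
      if S.embed q.1.1 ++ [q.2] = S.embed q.1.2 ∨ S.embed q.1.1 = S.embed q.1.2 ++ [S.inv q.2]
      then [q.2] else S.recursiveWord hR q.1.1 q.2 :=
    Primrec.ite
      (.or (Primrec.eq.comp (Primrec.list_append.comp hy (hletter id)) hz)
        (Primrec.eq.comp hy (Primrec.list_append.comp hz (hletter S.inv))))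
      (hletter id)
      ((S.primrec_recursiveWord hR).comp (Primrec.fst.comp Primrec.fst) Primrec.snd)
  have hnf := S.computable_normalForm_eval_gen hR
  refine (hword.to_comp.comp (((hnf.comp Computable.fst).pair
    (hnf.comp Primrec.list_concat.to_comp)).pair Computable.snd)).of_eq fun ⟨w, c⟩ => ?_
  simp [stackingMap_eq_ite]

theorem computablePred_eq_stackingMap :
    ComputablePred fun x : List N × N × List N =>
      x.2.2 = S.stackingMap hR (eval S.gen x.1, x.2.1) :=
  computablePred_eq (Computable.snd.comp Computable.snd)
    ((S.computable₂_stackingMap_eval hR).comp Computable.fst (Computable.fst.comp Computable.snd))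

end Computability

end Symmetrization

/-- a group admitting a finite complete rewriting system is algorithmically
stackable over some finite symmetric generating set (with decidable equality, realized
as `Fin n`). -/
theorem algorithmically_stackable_of_completeRewritingSystem {G : Type*} [Group G]
    {A : Type*} [Fintype A]
    (ρ : A → G) (R : Set (List A × List A))
    (hR : IsCompleteRewritingSystem ρ R) :
    ∃ (n : ℕ) (ρ' : Fin n → G) (ι' : Fin n → Fin n)
      (C : Set (List (Fin n))) (lt : G × Fin n → G × Fin n → Prop) (k : ℕ)
      (Φ : G × Fin n → List (Fin n)),
      Subgroup.closure (Set.range ρ') = ⊤ ∧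
      (∀ a : Fin n, ρ' a ≠ 1) ∧
      Function.Involutive ι' ∧
      (∀ a : Fin n, ρ' (ι' a) = (ρ' a)⁻¹) ∧
      IsStackableStructure ρ' ι' C lt k ∧
      IsExtendedStackingMap ρ' ι' C lt k Φ ∧
      ComputablePred (fun x : List (Fin n) × Fin n × List (Fin n) =>
        x.2.2 = Φ (eval ρ' x.1, x.2.1)) := by
  classical
  obtain ⟨L, rfl⟩ : ∃ L : List (List A × List A), R = {r | r ∈ L} :=
    ⟨hR.1.toFinset.toList, by simp⟩
  obtain ⟨n, ⟨S⟩⟩ := Symmetrization.exists_fin ρ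
  obtain ⟨k, hk⟩ := S.exists_length_stackingMap_le hR
  let _ : Primcodable A := Primcodable.ofEquiv _ (Fintype.equivFin A)
  have hC := S.isNormalFormSet_normalForms hR
  have hdeg := fun e => S.stackingMap_of_isDegenerate hR (e := e)
  exact ⟨n, S.gen, S.inv, S.normalForms {r | r ∈ L}, _, k, S.stackingMap hR,
    hC.closure_range_eq_top, S.gen_ne_one, S.involutive_inv, S.gen_inv,
    isStackableStructure_transGen (S.nil_mem_normalForms hR) hC (S.wellFounded_stackingRel hR)
      hdeg (S.eval_stackingMap hR) hk,
    isExtendedStackingMap_transGen hdeg (S.eval_stackingMap hR) hk,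
    S.computablePred_eq_stackingMap hR⟩

end Stk
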